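/- Let n ≥ 1, let X be a finite index set, and let {Π_x}_{x∈X} be a POVM on ℂ^{2ⁿ}: each Π_x is a positive semidefinite Hermitian 2ⁿ × 2ⁿ matrix, ∑_{x∈X} Π_x = I, and Tr[Π_x] > 0 for each x. Define F_{aa} := 2^{−n} ∑_{x∈X} (Tr[Π_x P_a])² / Tr[Π_x] for a ∈ {1, …, 4ⁿ − 1}. Then there exists an index a ∈ {1, …, 4ⁿ − 1} such that F_{aa} ≤ (2ⁿ − 1)/(4ⁿ − 1). -/

import Mathlib

open Matrix Kronecker BigOperators ComplexOrder

/-- The single-qubit Pauli X matrix. -/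
def sigmaX : Matrix (Fin 2) (Fin 2) ℂ := !![0, 1; 1, 0]

/-- The single-qubit Pauli Z matrix. -/
def sigmaZ : Matrix (Fin 2) (Fin 2) ℂ := !![1, 0; 0, -1]

/-- The single-qubit Pauli operator `i^{a_x a_z} X^{a_x} Z^{a_z}`. -/
noncomputable def pauli1 (ax az : Bool) : Matrix (Fin 2) (Fin 2) ℂ :=
  (Complex.I ^ ((if ax then 1 else 0) * (if az then 1 else 0) : ℕ)) •
    (sigmaX ^ (if ax then (1 : ℕ) else 0) * sigmaZ ^ (if az then (1 : ℕ) else 0))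

/-- Index of an `n`-qubit Pauli operator: the pair `(a_x, a_z)` of bit strings
(the binary representation of `a ∈ {0, …, 4ⁿ − 1}`). -/
abbrev PauliIdx (n : ℕ) := (Fin n → Bool) × (Fin n → Bool)

/-- The index of the identity Pauli operator `P_0 = I`. -/
def pauliZero (n : ℕ) : PauliIdx n := (fun _ => false, fun _ => false)

/-- The `n`-qubit Pauli operator `P_a = ⨂_{k=1}^n i^{a_{x,k} a_{z,k}} X^{a_{x,k}} Z^{a_{z,k}}`,
the `n`-fold Kronecker product realized on the index set `Fin n → Fin 2`. -/
noncomputable def pauliOp {n : ℕ} (a : PauliIdx n) :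
    Matrix (Fin n → Fin 2) (Fin n → Fin 2) ℂ :=
  Matrix.of fun j k => ∏ l, pauli1 (a.1 l) (a.2 l) (j l) (k l)

/-- The symplectic inner product `⟨[a]₂, [b]₂⟩ = ∑_k (a_{x,k} b_{z,k} + a_{z,k} b_{x,k})`
of the binary representations of two Pauli indices. -/
def sympl {n : ℕ} (a b : PauliIdx n) : ℕ :=
  ∑ k, ((if a.1 k then 1 else 0) * (if b.2 k then 1 else 0)
      + (if a.2 k then 1 else 0) * (if b.1 k then 1 else 0))

/-!
The Pauli operators form a tight frame with constant `2 ^ n`, and a positive semidefinite matrix has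
Hilbert–Schmidt norm at most its trace, so `∑ a, Tr[Π P_a]² ≤ 2 ^ n * Tr[Π]²` for each effect `Π`.
The identity alone contributes `Tr[Π]²`. Dividing the remainder by `Tr[Π]` and summing over the
effects bounds the Fisher trace `∑ a ≠ 0, F_aa` by `2 ^ n - 1`, and one of the `4 ^ n - 1` entries
is at most the average.
-/

section OperatorFrames

variable {𝕜 ι κ m n : Type*} [RCLike 𝕜] [Fintype κ] [DecidableEq m] [DecidableEq n]

theorem dotProduct_star_self_eq_sum_norm_sq [Fintype ι] (v : ι → 𝕜) :
    v ⬝ᵥ star v = ((∑ i, ‖v i‖ ^ 2 : ℝ) : 𝕜) := by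
  simp [dotProduct, RCLike.mul_conj]

/-- A tight frame of matrices for the Hilbert–Schmidt inner product, with frame constant `c`. It is
encoded by the completeness relation `∑ a, P a ⊗ conj (P a) = c • (identity of Mat m n)` written in
entries, which is the form that is multiplicative under tensor products. -/
def IsTightOperatorFrame (P : κ → Matrix m n 𝕜) (c : ℝ) : Prop :=
  ∀ i k j l, ∑ a, P a i j * star (P a k l) = if i = k ∧ j = l then (c : 𝕜) else 0

namespace IsTightOperatorFrame

theorem comp_equiv {κ' : Type*} [Fintype κ'] {P : κ → Matrix m n 𝕜} {c : ℝ}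
    (hP : IsTightOperatorFrame P c) (e : κ' ≃ κ) : IsTightOperatorFrame (P ∘ e) c :=
  fun i k j l => (e.sum_comp fun a => P a i j * star (P a k l)).trans (hP i k j l)

theorem nonneg [Nonempty m] [Nonempty n] {P : κ → Matrix m n 𝕜} {c : ℝ}
    (hP : IsTightOperatorFrame P c) : 0 ≤ c := by
  obtain ⟨i⟩ := ‹Nonempty m›
  obtain ⟨j⟩ := ‹Nonempty n›
  have h : ((∑ a, ‖P a i j‖ ^ 2 : ℝ) : 𝕜) = c := by
    simpa [RCLike.mul_conj] using hP i i j j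
  rw [← RCLike.ofReal_injective h]
  positivity

theorem piTensor [Fintype ι] [DecidableEq ι] {m n κ : ι → Type*} [∀ t, Fintype (κ t)]
    [∀ t, DecidableEq (m t)] [∀ t, DecidableEq (n t)] {P : ∀ t, κ t → Matrix (m t) (n t) 𝕜}
    {c : ι → ℝ} (hP : ∀ t, IsTightOperatorFrame (P t) (c t)) :
    IsTightOperatorFrame (κ := ∀ t, κ t)
      (fun f => Matrix.of fun (i : ∀ t, m t) (j : ∀ t, n t) => ∏ t, P t (f t) (i t) (j t))
      (∏ t, c t) := by
  intro i k j l
  calc ∑ f : ∀ t, κ t, (∏ t, P t (f t) (i t) (j t)) * star (∏ t, P t (f t) (k t) (l t))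
      = ∏ t, ∑ a, P t a (i t) (j t) * star (P t a (k t) (l t)) := by
        simp only [star_prod, ← Finset.prod_mul_distrib, Fintype.prod_sum]
    _ = ∏ t, if i t = k t ∧ j t = l t then (c t : 𝕜) else 0 :=
        Finset.prod_congr rfl fun t _ => hP t _ _ _ _
    _ = if i = k ∧ j = l then ((∏ t, c t : ℝ) : 𝕜) else 0 := by
        simp only [Fintype.prod_ite_zero, forall_and, funext_iff, RCLike.ofReal_prod]

theorem sum_norm_sq_trace [Fintype m] [Fintype n] {P : κ → Matrix m n 𝕜} {c : ℝ}
    (hP : IsTightOperatorFrame P c) (A : Matrix n m 𝕜) :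
    ∑ a, ‖(A * P a).trace‖ ^ 2 = c * ∑ i, ∑ j, ‖A i j‖ ^ 2 := by
  let M : Matrix (n × m) κ 𝕜 := Matrix.of fun p a => P a p.2 p.1
  have hM : M * Mᴴ = (c : 𝕜) • (1 : Matrix (n × m) (n × m) 𝕜) := by
    ext ⟨j, i⟩ ⟨l, k⟩
    simpa [M, Matrix.mul_apply, Matrix.one_apply, and_comm] using hP i k j l
  let v : n × m → 𝕜 := fun p => A p.1 p.2
  have hv (a : κ) : (v ᵥ* M) a = (A * P a).trace := by
    simp [v, M, Matrix.vecMul, dotProduct, Matrix.trace, Matrix.mul_apply, Fintype.sum_prod_type]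
  have hparseval : (v ᵥ* M) ⬝ᵥ star (v ᵥ* M) = (c : 𝕜) * (v ⬝ᵥ star v) := by
    rw [Matrix.star_vecMul, Matrix.dotProduct_mulVec, Matrix.vecMul_vecMul, hM,
      Matrix.vecMul_smul, Matrix.vecMul_one, smul_dotProduct, smul_eq_mul]
  simp only [dotProduct_star_self_eq_sum_norm_sq, hv, v, Fintype.sum_prod_type] at hparseval
  exact_mod_cast hparseval

end IsTightOperatorFrame

end OperatorFrames

section PosSemidef

variable {𝕜 m : Type*} [RCLike 𝕜] {A : Matrix m m 𝕜}

-- The `2 × 2` principal minor at `i, j` is nonnegative.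
theorem norm_sq_apply_le_of_posSemidef (hA : A.PosSemidef) (i j : m) :
    ‖A i j‖ ^ 2 ≤ RCLike.re (A i i) * RCLike.re (A j j) := by
  have hdet : 0 ≤ A i i * A j j - A i j * A j i := by
    simpa only [Matrix.det_fin_two, Matrix.submatrix_apply, Matrix.cons_val_zero,
      Matrix.cons_val_one] using (hA.submatrix ![i, j]).det_nonneg
  rw [← hA.isHermitian.apply j i, RCLike.star_def, RCLike.mul_conj,
    ← hA.isHermitian.coe_re_apply_self i, ← hA.isHermitian.coe_re_apply_self j] at hdet
  exact sub_nonneg.mp (by exact_mod_cast hdet)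

theorem sum_norm_sq_le_re_trace_sq_of_posSemidef [Fintype m] (hA : A.PosSemidef) :
    ∑ i, ∑ j, ‖A i j‖ ^ 2 ≤ RCLike.re A.trace ^ 2 := by
  simp only [Matrix.trace, Matrix.diag_apply, map_sum, sq (∑ _, _), Finset.sum_mul_sum]
  gcongr with i _ j _
  exact norm_sq_apply_le_of_posSemidef hA i j

end PosSemidef

section Fisher

variable {𝕜 ι κ m : Type*} [RCLike 𝕜] [Fintype ι] [Fintype κ] [Fintype m]

/-- The diagonal entry, in the direction of the observable `Q`, of the Fisher information matrix at
the maximally mixed state for the measurement with effects `K x`. Effects of trace zero contribute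
nothing, by `y / 0 = 0`. -/
noncomputable def fisherDiag (K : ι → Matrix m m 𝕜) (Q : Matrix m m 𝕜) : ℝ :=
  (Fintype.card m : ℝ)⁻¹ * ∑ x, RCLike.re (K x * Q).trace ^ 2 / RCLike.re (K x).trace

theorem sum_re_trace_of_sum_eq_one [DecidableEq m] {K : ι → Matrix m m 𝕜} (hsum : ∑ x, K x = 1) :
    ∑ x, RCLike.re (K x).trace = Fintype.card m := by
  rw [← map_sum, ← Matrix.trace_sum, hsum, Matrix.trace_one, RCLike.natCast_re]

variable [DecidableEq m] [Nonempty m] {P : κ → Matrix m m 𝕜} {c : ℝ} {a₀ : κ}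

theorem IsTightOperatorFrame.sum_erase_re_trace_sq_le [DecidableEq κ]
    (hP : IsTightOperatorFrame P c) (ha₀ : P a₀ = 1) {A : Matrix m m 𝕜} (hA : A.PosSemidef) :
    ∑ a ∈ Finset.univ.erase a₀, RCLike.re (A * P a).trace ^ 2
      ≤ (c - 1) * RCLike.re A.trace ^ 2 := by
  have hall : ∑ a, RCLike.re (A * P a).trace ^ 2 ≤ c * RCLike.re A.trace ^ 2 :=
    calc ∑ a, RCLike.re (A * P a).trace ^ 2
        ≤ ∑ a, ‖(A * P a).trace‖ ^ 2 :=
          Finset.sum_le_sum fun a _ => sq_le_sq.mpr (by simpa using RCLike.abs_re_le_norm _)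
      _ = c * ∑ i, ∑ j, ‖A i j‖ ^ 2 := hP.sum_norm_sq_trace A
      _ ≤ c * RCLike.re A.trace ^ 2 := by
          gcongr
          · exact hP.nonneg
          · exact sum_norm_sq_le_re_trace_sq_of_posSemidef hA
  rw [Finset.sum_erase_eq_sub (Finset.mem_univ a₀), ha₀, mul_one]
  linarith

theorem IsTightOperatorFrame.sum_erase_fisherDiag_le [DecidableEq κ]
    (hP : IsTightOperatorFrame P c) (ha₀ : P a₀ = 1) {K : ι → Matrix m m 𝕜}
    (hpsd : ∀ x, (K x).PosSemidef) (htr : ∀ x, 0 < RCLike.re (K x).trace) :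
    ∑ a ∈ Finset.univ.erase a₀, fisherDiag K (P a)
      ≤ (c - 1) * ((Fintype.card m : ℝ)⁻¹ * ∑ x, RCLike.re (K x).trace) := by
  have heffect (x : ι) : (∑ a ∈ Finset.univ.erase a₀, RCLike.re (K x * P a).trace ^ 2) /
      RCLike.re (K x).trace ≤ (c - 1) * RCLike.re (K x).trace := by
    rw [div_le_iff₀ (htr x), mul_assoc, ← sq]
    exact hP.sum_erase_re_trace_sq_le ha₀ (hpsd x)
  unfold fisherDiag
  rw [← Finset.mul_sum, Finset.sum_comm, mul_left_comm, Finset.mul_sum (a := c - 1)]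
  simp only [← Finset.sum_div]
  gcongr with x
  exact heffect x

theorem povm_fisher_diag_exists_small_general [Nontrivial κ] (hP : IsTightOperatorFrame P c)
    (ha₀ : P a₀ = 1) {K : ι → Matrix m m 𝕜} (hpsd : ∀ x, (K x).PosSemidef)
    (htr : ∀ x, 0 < RCLike.re (K x).trace) :
    ∃ a ≠ a₀, fisherDiag K (P a) ≤
      (c - 1) / (Fintype.card κ - 1) * ((Fintype.card m : ℝ)⁻¹ * ∑ x, RCLike.re (K x).trace) := by
  classical
  have hcard : (Fintype.card κ : ℝ) - 1 ≠ 0 :=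
    sub_ne_zero.mpr (by exact_mod_cast Fintype.one_lt_card.ne')
  suffices h : ∃ a ∈ Finset.univ.erase a₀, fisherDiag K (P a) ≤ (c - 1) / (Fintype.card κ - 1) *
      ((Fintype.card m : ℝ)⁻¹ * ∑ x, RCLike.re (K x).trace) by
    simpa using h
  refine Finset.exists_le_of_sum_le
    ((exists_ne a₀).imp fun a ha => Finset.mem_erase.mpr ⟨ha, Finset.mem_univ a⟩) ?_
  refine (hP.sum_erase_fisherDiag_le ha₀ hpsd htr).trans_eq ?_
  rw [Finset.sum_const, nsmul_eq_mul, Finset.cast_card_erase_of_mem (Finset.mem_univ a₀),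
    Finset.card_univ]
  field_simp

end Fisher

section Pauli

theorem isTightOperatorFrame_pauli1 :
    IsTightOperatorFrame (fun b : Bool × Bool => pauli1 b.1 b.2) 2 := by
  intro i k j l
  rw [Fintype.sum_prod_type]
  fin_cases i <;> fin_cases j <;> fin_cases k <;> fin_cases l <;>
    norm_num [pauli1, sigmaX, sigmaZ]

variable (n : ℕ)

theorem card_pauliIdx : Fintype.card (PauliIdx n) = 4 ^ n := by
  simp [← mul_pow]

theorem isTightOperatorFrame_pauliOp :
    IsTightOperatorFrame (pauliOp : PauliIdx n → _) (2 ^ n) := by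
  have h := (IsTightOperatorFrame.piTensor fun _ : Fin n => isTightOperatorFrame_pauli1).comp_equiv
    (Equiv.arrowProdEquivProdArrow (Fin n) (fun _ => Bool) (fun _ => Bool)).symm
  rw [Finset.prod_const, Finset.card_univ, Fintype.card_fin] at h
  exact h

theorem pauliOp_pauliZero : pauliOp (pauliZero n) = 1 := by
  have hpauli1 : pauli1 false false = 1 := by simp [pauli1]
  ext j k
  simp [pauliOp, pauliZero, hpauli1, Matrix.one_apply, Fintype.prod_ite_zero, funext_iff]

end Pauli

/-- **Existence of a poorly informative Pauli direction for single-copy POVMs.** For any POVM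
`{Π_x}` on `ℂ^{2ⁿ}`, there exists a nonzero Pauli index `a` whose diagonal Fisher
information entry `F_{aa} = 2^{−n} ∑_x (Tr[Π_x P_a])² / Tr[Π_x]` at the maximally mixed state
satisfies `F_{aa} ≤ (2ⁿ − 1)/(4ⁿ − 1)`. -/
theorem povm_fisher_diag_exists_small (n : ℕ) (hn : 1 ≤ n)
    {ι : Type*} [Fintype ι]
    (K : ι → Matrix (Fin n → Fin 2) (Fin n → Fin 2) ℂ)
    (hpsd : ∀ x, (K x).PosSemidef)
    (hsum : ∑ x, K x = 1)
    (htr : ∀ x, 0 < ((K x).trace).re) :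
    ∃ a ∈ Finset.univ.erase (pauliZero n),
      ((2 : ℝ) ^ n)⁻¹ * (∑ x, ((K x * pauliOp a).trace).re ^ 2 / ((K x).trace).re)
        ≤ ((2 : ℝ) ^ n - 1) / ((4 : ℝ) ^ n - 1) := by
  have : Nonempty (Fin n) := ⟨⟨0, hn⟩⟩
  obtain ⟨a, ha, hle⟩ := povm_fisher_diag_exists_small_general (isTightOperatorFrame_pauliOp n)
    (pauliOp_pauliZero n) hpsd htr
  rw [sum_re_trace_of_sum_eq_one hsum, inv_mul_cancel₀ (by simp), mul_one, card_pauliIdx] at hle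
  exact ⟨a, by simpa using ha, by simpa [fisherDiag] using hle⟩
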